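/- arXiv:2512.14497 — 2 statements merged into one kernel-verified Lean document; each statement's English description precedes it below -/
import Mathlib

section
/- (Theorem 3) Let n ≤ m, let (α_k)_{k∈Fin n} be an orthonormal basis of ℂ^n, (β_k)_{k∈Fin n} an orthonormal family in ℂ^m, λ : Fin n → ℝ with λ_k ≥ 0 and ∑_k λ_k = 1, and ψ := ∑_k √λ_k (α_k ⊗ β_k). Let H := A ⊗ I_m + I_n ⊗ B with A an n×n and B an m×m Hermitian matrix, and let Π be the measurement channel with projectors P_k := |α_k⟩⟨α_k|. Then ξ(|ψ⟩⟨ψ|,H) − ξ(Π(|ψ⟩⟨ψ|),H) = ∑_{k=1}^{nm} ε_k^↑ μ_k^↓ − ε_min ≥ 0, where μ^↓ is the nonincreasing rearrangement of λ padded with nm − n zeros, ε_1^↑ ≤ … ≤ ε_{nm}^↑ are the eigenvalues of H in nondecreasing order with multiplicity, and ε_min = ε_1^↑. -/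
open scoped BigOperators ComplexOrder
open Matrix Kronecker

/-- Nondecreasing rearrangement of a finite real-valued family. -/
noncomputable def sortUp {ι : Type*} [Fintype ι] (f : ι → ℝ) : Fin (Fintype.card ι) → ℝ :=
  (f ∘ (Fintype.equivFin ι).symm) ∘ Tuple.sort (f ∘ (Fintype.equivFin ι).symm)

/-- Nonincreasing rearrangement of a finite real-valued family. -/
noncomputable def sortDown {ι : Type*} [Fintype ι] (f : ι → ℝ) : Fin (Fintype.card ι) → ℝ :=
  fun i => sortUp f i.rev

/-- Ergotropy ξ(ρ,H) = Tr(ρH) − inf over unitaries V of Tr(V ρ V* H). -/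
noncomputable def ergotropy {ι : Type*} [Fintype ι] [DecidableEq ι] (ρ H : Matrix ι ι ℂ) : ℝ :=
  ((ρ * H).trace).re -
    ⨅ V : Matrix.unitaryGroup ι ℂ,
      (((V : Matrix ι ι ℂ) * ρ * star (V : Matrix ι ι ℂ) * H).trace).re

/-- Passive energy E_p(ρ,H) = ∑ λ_i^↓ ε_i^↑. -/
noncomputable def passiveEnergy {ι : Type*} [Fintype ι] [DecidableEq ι]
    {ρ H : Matrix ι ι ℂ} (hρ : ρ.IsHermitian) (hH : H.IsHermitian) : ℝ :=
  ∑ i, sortDown hρ.eigenvalues i * sortUp hH.eigenvalues i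

/-- |u⟩⟨u|, the matrix with entries u_i conj(u_j). -/
noncomputable def ketbra {ι : Type*} (u : ι → ℂ) : Matrix ι ι ℂ := Matrix.vecMulVec u (star u)

/-- Tensor (Kronecker) product of vectors: (u ⊗ v)_(i,j) = u_i v_j. -/
noncomputable def vecTensor {ιa ιb : Type*} (u : ιa → ℂ) (v : ιb → ℂ) : ιa × ιb → ℂ :=
  fun p => u p.1 * v p.2

/-- The local measurement channel Π(ρ) = ∑_k (P_k ⊗ I) ρ (P_k ⊗ I). -/
noncomputable def pinch {ιa ιb K : Type*} [Fintype ιa] [Fintype ιb] [Fintype K]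
    [DecidableEq ιa] [DecidableEq ιb]
    (P : K → Matrix ιa ιa ℂ) (ρ : Matrix (ιa × ιb) (ιa × ιb) ℂ) :
    Matrix (ιa × ιb) (ιa × ιb) ℂ :=
  ∑ k, (P k ⊗ₖ (1 : Matrix ιb ιb ℂ)) * ρ * (P k ⊗ₖ (1 : Matrix ιb ιb ℂ))

/-- Local ergotropy ξ^l(ρ,H) = Tr(ρH) − inf over local unitaries U⊗V of Tr((U⊗V) ρ (U⊗V)* H). -/
noncomputable def localErgotropy {n m : ℕ}
    (ρ H : Matrix (Fin n × Fin m) (Fin n × Fin m) ℂ) : ℝ :=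
  ((ρ * H).trace).re -
    ⨅ W : Matrix.unitaryGroup (Fin n) ℂ × Matrix.unitaryGroup (Fin m) ℂ,
      ((((W.1 : Matrix (Fin n) (Fin n) ℂ) ⊗ₖ (W.2 : Matrix (Fin m) (Fin m) ℂ)) * ρ *
        star ((W.1 : Matrix (Fin n) (Fin n) ℂ) ⊗ₖ (W.2 : Matrix (Fin m) (Fin m) ℂ)) * H).trace).re

/-- First marginal (partial trace over the second factor). -/
noncomputable def marginalA {n m : ℕ} (ρ : Matrix (Fin n × Fin m) (Fin n × Fin m) ℂ) :
    Matrix (Fin n) (Fin n) ℂ :=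
  Matrix.of fun i i' => ∑ j, ρ (i, j) (i', j)

/-- Second marginal (partial trace over the first factor). -/
noncomputable def marginalB {n m : ℕ} (ρ : Matrix (Fin n × Fin m) (Fin n × Fin m) ℂ) :
    Matrix (Fin m) (Fin m) ℂ :=
  Matrix.of fun j j' => ∑ i, ρ (i, j) (i, j')

/-! The spectral theorem turns `Tr(V ρ V* H)` into `∑ |Q i j|² ε_i d_j` with `Q` unitary and
`d`, `ε` the eigenvalues of `ρ` and `H`. The matrix `|Q i j|²` is doubly stochastic, so Birkhoff's
theorem and the rearrangement inequality identify the minimum over `V` with `∑ ε_k^↑ d_k^↓`.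
Measuring in the Schmidt basis turns `ψ` into the mixture of the vectors `α_k ⊗ β_k` with weights
`λ_k`, which has the same energy as `ψ` because `H` has no matrix elements between different
Schmidt vectors. Hence the gap is the difference of the two minima, and that of a pure state is
`ε_min`. -/

section Rearrangement

variable {ι : Type*} [Fintype ι]

lemma exists_equiv_sortUp_eq_comp (g : ι → ℝ) :
    ∃ e : Fin (Fintype.card ι) ≃ ι, sortUp g = g ∘ e :=
  ⟨(Tuple.sort (g ∘ (Fintype.equivFin ι).symm)).trans (Fintype.equivFin ι).symm, rfl⟩

lemma exists_equiv_sortDown_eq_comp (g : ι → ℝ) :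
    ∃ e : Fin (Fintype.card ι) ≃ ι, sortDown g = g ∘ e := by
  obtain ⟨e, he⟩ := exists_equiv_sortUp_eq_comp g
  exact ⟨Fin.revPerm.trans e, funext fun i => congrFun he i.rev⟩

lemma monotone_sortUp (g : ι → ℝ) : Monotone (sortUp g) :=
  Tuple.monotone_sort _

lemma antitone_sortDown (g : ι → ℝ) : Antitone (sortDown g) :=
  fun _ _ hij => monotone_sortUp g (Fin.rev_le_rev.mpr hij)

lemma isLeast_sum_sortUp_mul_sortDown (e d : ι → ℝ) :
    IsLeast (Set.range fun σ : Equiv.Perm ι => ∑ i, e i * d (σ i))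
      (∑ k, sortUp e k * sortDown d k) := by
  obtain ⟨a, ha⟩ := exists_equiv_sortUp_eq_comp e
  obtain ⟨b, hb⟩ := exists_equiv_sortDown_eq_comp d
  refine ⟨⟨a.symm.trans b, ?_⟩, ?_⟩
  · dsimp only
    rw [← a.sum_comp, ha, hb]
    simp
  · rintro _ ⟨σ, rfl⟩
    calc ∑ k, sortUp e k * sortDown d k
        ≤ ∑ k, sortUp e k * sortDown d ((a.trans σ).trans b.symm k) :=
          ((monotone_sortUp e).antivary (antitone_sortDown d)).sum_mul_le_sum_mul_comp_perm
      _ = ∑ i, e i * d (σ i) := by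
          rw [← a.sum_comp, ha, hb]
          simp

lemma iInf_le_sum_sortUp_mul_sortDown (e : ι → ℝ) {d : ι → ℝ} (hd : ∀ i, 0 ≤ d i)
    (hsum : ∑ i, d i = 1) : ⨅ i, e i ≤ ∑ k, sortUp e k * sortDown d k := by
  obtain ⟨σ, hσ⟩ := (isLeast_sum_sortUp_mul_sortDown e d).1
  rw [← hσ]
  calc ⨅ i, e i = ∑ i, (⨅ j, e j) * d (σ i) := by
        rw [← Finset.mul_sum, Equiv.sum_comp σ d, hsum, mul_one]
    _ ≤ ∑ i, e i * d (σ i) := Finset.sum_le_sum fun i _ =>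
        mul_le_mul_of_nonneg_right (ciInf_le (Finite.bddBelow_range e) i) (hd _)

lemma sum_sortUp_mul_sortDown_single [DecidableEq ι] (e : ι → ℝ) (p : ι) :
    ∑ k, sortUp e k * sortDown (Pi.single p 1) k = ⨅ i, e i := by
  have : Nonempty ι := ⟨p⟩
  have hnonneg : (0 : ι → ℝ) ≤ Pi.single p 1 := Pi.single_nonneg.mpr zero_le_one
  have hle := iInf_le_sum_sortUp_mul_sortDown e hnonneg (by simp)
  obtain ⟨q, hq⟩ := exists_eq_ciInf_of_finite (f := e)
  refine le_antisymm ?_ hle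
  calc _ ≤ ∑ i, e i * (Pi.single p 1 : ι → ℝ) (Equiv.swap q p i) :=
        (isLeast_sum_sortUp_mul_sortDown e _).2 ⟨Equiv.swap q p, rfl⟩
    _ = ⨅ i, e i := by
        simp [Pi.single_apply, Equiv.swap_apply_eq_iff, hq]

end Rearrangement

lemma exists_perm_sum_le_of_mem_doublyStochastic {R ι : Type*} [Field R] [LinearOrder R]
    [IsStrictOrderedRing R] [Fintype ι] [DecidableEq ι] {M : Matrix ι ι R}
    (hM : M ∈ doublyStochastic R ι) (C : Matrix ι ι R) :
    ∃ σ : Equiv.Perm ι, ∑ i, C i (σ i) ≤ ∑ i, ∑ j, M i j * C i j := by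
  let cost : Matrix ι ι R →ₗ[R] R := Matrix.traceLinearMap ι R R ∘ₗ LinearMap.mulRight R Cᵀ
  have hcost (X : Matrix ι ι R) : cost X = ∑ i, ∑ j, X i j * C i j := by
    simp [cost, Matrix.trace, Matrix.mul_apply]
  rw [← SetLike.mem_coe, doublyStochastic_eq_convexHull_permMatrix] at hM
  obtain ⟨_, ⟨σ, rfl⟩, hσ⟩ :=
    (cost.concaveOn convex_univ).exists_le_of_mem_convexHull (Set.subset_univ _) hM
  refine ⟨σ, ?_⟩
  simpa [hcost, PEquiv.toMatrix_apply, Equiv.toPEquiv_apply] using hσ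

lemma mul_diagonal_mul_conjTranspose_eq_sum_vecMulVec {R ι κ : Type*} [CommSemiring R] [StarRing R]
    [Fintype κ] [DecidableEq κ] (U : Matrix ι κ R) (d : κ → R) :
    U * diagonal d * Uᴴ = ∑ p, d p • vecMulVec (U.col p) (star (U.col p)) := by
  ext i j
  rw [Matrix.mul_apply]
  simp only [Matrix.mul_diagonal, Matrix.conjTranspose_apply, Matrix.sum_apply, Matrix.smul_apply,
    Matrix.vecMulVec_apply, Pi.star_apply, Matrix.col_apply, smul_eq_mul]
  exact Finset.sum_congr rfl fun p _ => by ring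

section Unitary

variable {𝕜 ι : Type*} [RCLike 𝕜] [Fintype ι] [DecidableEq ι]

lemma norm_sq_mem_doublyStochastic_of_mem_unitaryGroup {U : Matrix ι ι 𝕜}
    (hU : U ∈ Matrix.unitaryGroup ι 𝕜) :
    (Matrix.of fun i j => ‖U i j‖ ^ 2) ∈ doublyStochastic ℝ ι := by
  rw [mem_doublyStochastic_iff_sum]
  refine ⟨fun i j => sq_nonneg _, fun i => ?_, fun j => ?_⟩ <;>
    apply RCLike.ofReal_injective (K := 𝕜)
  · have hrow := congrFun₂ (Matrix.mem_unitaryGroup_iff.mp hU) i i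
    simpa [Matrix.mul_apply, Matrix.star_apply, RCLike.mul_conj] using hrow
  · have hcol := congrFun₂ (Matrix.mem_unitaryGroup_iff'.mp hU) j j
    simpa [Matrix.mul_apply, Matrix.star_apply, RCLike.conj_mul] using hcol

lemma permMatrix_mem_unitaryGroup (σ : Equiv.Perm ι) :
    σ.permMatrix 𝕜 ∈ Matrix.unitaryGroup ι 𝕜 := by
  rw [Matrix.mem_unitaryGroup_iff, Matrix.star_eq_conjTranspose, Matrix.conjTranspose_permMatrix,
    ← Matrix.permMatrix_mul, inv_mul_cancel, Matrix.permMatrix_one]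

lemma re_trace_mul_diagonal_mul_star_mul_diagonal (Q : Matrix ι ι 𝕜) (d e : ι → ℝ) :
    RCLike.re (Q * diagonal (RCLike.ofReal ∘ d) * star Q * diagonal (RCLike.ofReal ∘ e)).trace
      = ∑ i, ∑ j, ‖Q i j‖ ^ 2 * (e i * d j) := by
  have hentry (i j : ι) :
      Q i j * (d j : 𝕜) * star (Q i j) * (e i : 𝕜) = ((‖Q i j‖ ^ 2 * (e i * d j) : ℝ) : 𝕜) := by
    push_cast
    rw [← RCLike.mul_conj, RCLike.star_def]
    ring
  simp only [Matrix.trace, Matrix.diag_apply, Matrix.mul_diagonal,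
    Matrix.mul_apply (M := Q * diagonal _), Matrix.star_apply, Finset.sum_mul, map_sum,
    Function.comp_apply, hentry, RCLike.ofReal_re]

lemma isLeast_re_trace_unitary_conj_diagonal (d e : ι → ℝ) :
    IsLeast (Set.range fun V : Matrix.unitaryGroup ι 𝕜 =>
        RCLike.re ((V : Matrix ι ι 𝕜) * diagonal (RCLike.ofReal ∘ d) * star (V : Matrix ι ι 𝕜) *
          diagonal (RCLike.ofReal ∘ e)).trace)
      (∑ k, sortUp e k * sortDown d k) := by
  simp only [re_trace_mul_diagonal_mul_star_mul_diagonal]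
  obtain ⟨⟨σ, hσ⟩, hle⟩ := isLeast_sum_sortUp_mul_sortDown e d
  refine ⟨⟨⟨σ.permMatrix 𝕜, permMatrix_mem_unitaryGroup σ⟩, ?_⟩, ?_⟩
  · simp [← hσ, PEquiv.toMatrix_apply, Equiv.toPEquiv_apply, apply_ite]
  · rintro _ ⟨V, rfl⟩
    obtain ⟨τ, hτ⟩ := exists_perm_sum_le_of_mem_doublyStochastic
      (norm_sq_mem_doublyStochastic_of_mem_unitaryGroup V.2) (Matrix.of fun i j => e i * d j)
    exact (hle ⟨τ, rfl⟩).trans hτ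

lemma iInf_re_trace_unitary_conj {H : Matrix ι ι 𝕜} (hH : H.IsHermitian)
    (U : Matrix.unitaryGroup ι 𝕜) (d : ι → ℝ) :
    ⨅ V : Matrix.unitaryGroup ι 𝕜,
        RCLike.re ((V : Matrix ι ι 𝕜) *
          ((U : Matrix ι ι 𝕜) * diagonal (RCLike.ofReal ∘ d) * star (U : Matrix ι ι 𝕜)) *
          star (V : Matrix ι ι 𝕜) * H).trace
      = ∑ k, sortUp hH.eigenvalues k * sortDown d k := by
  let W := hH.eigenvectorUnitary
  let changeFrame : Matrix.unitaryGroup ι 𝕜 ≃ Matrix.unitaryGroup ι 𝕜 :=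
    (Equiv.mulLeft (star W)).trans (Equiv.mulRight U)
  let energy (V : Matrix.unitaryGroup ι 𝕜) : ℝ :=
    RCLike.re ((V : Matrix ι ι 𝕜) * diagonal (RCLike.ofReal ∘ d) * star (V : Matrix ι ι 𝕜) *
      diagonal (RCLike.ofReal ∘ hH.eigenvalues)).trace
  have henergy (V : Matrix.unitaryGroup ι 𝕜) :
      RCLike.re ((V : Matrix ι ι 𝕜) *
          ((U : Matrix ι ι 𝕜) * diagonal (RCLike.ofReal ∘ d) * star (U : Matrix ι ι 𝕜)) *
          star (V : Matrix ι ι 𝕜) * H).trace = energy (changeFrame V) := by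
    conv_lhs => rw [hH.spectral_theorem, Unitary.conjStarAlgAut_apply, ← Matrix.mul_assoc,
      Matrix.trace_mul_comm]
    simp [energy, changeFrame, W, Matrix.mul_assoc]
  simp only [henergy]
  rw [changeFrame.surjective.iInf_comp energy]
  exact (isLeast_re_trace_unitary_conj_diagonal d hH.eigenvalues).csInf_eq

lemma exists_unitaryGroup_col_eq {K : Type*} [DecidableEq K] {w : K → ι → 𝕜}
    (hw : ∀ k l, star (w k) ⬝ᵥ w l = if k = l then 1 else 0) {f : K → ι}
    (hf : Function.Injective f) :
    ∃ U : Matrix.unitaryGroup ι 𝕜, ∀ k, (U : Matrix ι ι 𝕜).col (f k) = w k := by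
  let v : K → EuclideanSpace 𝕜 ι := fun k => WithLp.toLp 2 (w k)
  have hv : Orthonormal 𝕜 v := orthonormal_iff_ite.mpr fun k l => by
    rw [EuclideanSpace.inner_toLp_toLp, dotProduct_comm, hw]
  have hext : Orthonormal 𝕜 ((Set.range f).domRestrict (Function.extend f v 0)) := by
    convert hv.comp (Equiv.ofInjective f hf).symm (Equiv.injective _) using 1
    ext ⟨_, k, rfl⟩ x
    simp [hf.extend_apply, Equiv.ofInjective_symm_apply]
  obtain ⟨b, hb⟩ := hext.exists_orthonormalBasis_extension_of_card_eq (by simp)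
  refine ⟨⟨_, (EuclideanSpace.basisFun ι 𝕜).toMatrix_orthonormalBasis_mem_unitary b⟩, fun k => ?_⟩
  ext x
  simp [Module.Basis.toMatrix_apply, hb (f k) ⟨k, rfl⟩, hf.extend_apply, v]

end Unitary

section PureState

variable {ι : Type*}

lemma isHermitian_ketbra (u : ι → ℂ) : (ketbra u).IsHermitian := by
  rw [Matrix.IsHermitian, ketbra, Matrix.conjTranspose_vecMulVec, star_star]

lemma ketbra_smul (c : ℂ) (u : ι → ℂ) : ketbra (c • u) = (c * star c) • ketbra u := by
  rw [ketbra, star_smul, Matrix.smul_vecMulVec, Matrix.vecMulVec_smul, smul_smul, ketbra]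

variable [Fintype ι]

lemma trace_ketbra_mul (u : ι → ℂ) (M : Matrix ι ι ℂ) :
    (ketbra u * M).trace = star u ⬝ᵥ M *ᵥ u := by
  rw [ketbra, Matrix.vecMulVec_mul, Matrix.trace_vecMulVec, dotProduct_comm,
    Matrix.dotProduct_mulVec]

lemma ketbra_mulVec (u w : ι → ℂ) : ketbra u *ᵥ w = (star u ⬝ᵥ w) • u := by
  rw [ketbra, Matrix.vecMulVec_mulVec, op_smul_eq_smul]

lemma mul_ketbra_mul_conjTranspose (M : Matrix ι ι ℂ) (u : ι → ℂ) :
    M * ketbra u * Mᴴ = ketbra (M *ᵥ u) := by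
  rw [ketbra, Matrix.mul_vecMulVec, Matrix.vecMulVec_mul, ketbra, Matrix.star_mulVec]

variable {K : Type*} [Fintype K]

lemma star_sum_smul_dotProduct_mulVec_sum_smul {w : K → ι → ℂ} {M : Matrix ι ι ℂ}
    (hM : ∀ k l, k ≠ l → star (w k) ⬝ᵥ M *ᵥ w l = 0) (c : K → ℂ) :
    star (∑ k, c k • w k) ⬝ᵥ M *ᵥ (∑ k, c k • w k)
      = ∑ k, (c k * star (c k)) * (star (w k) ⬝ᵥ M *ᵥ w k) := by
  simp only [star_sum, star_smul, Matrix.mulVec_sum, Matrix.mulVec_smul, sum_dotProduct,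
    dotProduct_sum, smul_dotProduct, dotProduct_smul, smul_eq_mul]
  refine Finset.sum_congr rfl fun k _ => ?_
  rw [Fintype.sum_eq_single k fun l hl => by simp [hM l k hl]]
  ring

lemma star_sum_smul_dotProduct_sum_smul [DecidableEq K] {w : K → ι → ℂ}
    (hw : ∀ k l, star (w k) ⬝ᵥ w l = if k = l then 1 else 0) (c : K → ℂ) :
    star (∑ k, c k • w k) ⬝ᵥ (∑ k, c k • w k) = ∑ k, c k * star (c k) := by
  classical
  have h := star_sum_smul_dotProduct_mulVec_sum_smul (w := w) (M := 1)
    (fun k l hkl => by rw [Matrix.one_mulVec, hw, if_neg hkl]) c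
  simpa only [Matrix.one_mulVec, hw, if_true, mul_one] using h

lemma trace_ketbra_sum_smul_mul {w : K → ι → ℂ} {M : Matrix ι ι ℂ}
    (hM : ∀ k l, k ≠ l → star (w k) ⬝ᵥ M *ᵥ w l = 0) (c : K → ℂ) :
    (ketbra (∑ k, c k • w k) * M).trace
      = ((∑ k, (c k * star (c k)) • ketbra (w k)) * M).trace := by
  simp only [trace_ketbra_mul, star_sum_smul_dotProduct_mulVec_sum_smul hM, Matrix.sum_mul,
    Matrix.trace_sum, Matrix.smul_mul, Matrix.trace_smul, smul_eq_mul]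

end PureState

section Ergotropy

variable {ι : Type*} [Fintype ι] [DecidableEq ι] {H : Matrix ι ι ℂ} (hH : H.IsHermitian)

lemma ergotropy_sum_smul_ketbra {K : Type*} [Fintype K] [DecidableEq K] {w : K → ι → ℂ}
    (hw : ∀ k l, star (w k) ⬝ᵥ w l = if k = l then 1 else 0) {lam : K → ℝ} {μ : ι → ℝ} {f : K → ι}
    (hf : Function.Injective f) (hμf : ∀ k, μ (f k) = lam k)
    (hμ0 : ∀ p, p ∉ Set.range f → μ p = 0) :
    ergotropy (∑ k, (lam k : ℂ) • ketbra (w k)) H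
      = ((∑ k, (lam k : ℂ) • ketbra (w k)) * H).trace.re
        - ∑ k, sortUp hH.eigenvalues k * sortDown μ k := by
  obtain ⟨U, hU⟩ := exists_unitaryGroup_col_eq hw hf
  have hdiag : ∑ k, (lam k : ℂ) • ketbra (w k)
      = (U : Matrix ι ι ℂ) * diagonal (RCLike.ofReal ∘ μ) * star (U : Matrix ι ι ℂ) := by
    rw [Matrix.star_eq_conjTranspose, mul_diagonal_mul_conjTranspose_eq_sum_vecMulVec]
    refine Fintype.sum_of_injective f hf _ _ (fun p hp => ?_) fun k => ?_
    · simp [hμ0 p hp]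
    · simp [hμf, hU, ketbra]
  rw [ergotropy, ← iInf_re_trace_unitary_conj hH U μ, ← hdiag]
  rfl

lemma ergotropy_ketbra {ψ : ι → ℂ} (hψ : star ψ ⬝ᵥ ψ = 1) :
    ergotropy (ketbra ψ) H = (ketbra ψ * H).trace.re - ⨅ p, hH.eigenvalues p := by
  obtain ⟨p, -⟩ := Finset.nonempty_of_sum_ne_zero (hψ.trans_ne one_ne_zero)
  have h := ergotropy_sum_smul_ketbra hH (K := Unit) (w := fun _ => ψ) (lam := fun _ => 1)
    (μ := Pi.single p 1) (f := fun _ => p) (by simp [hψ]) (Function.injective_of_subsingleton _)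
    (by simp) (fun q hq => Pi.single_eq_of_ne (fun hqp => hq ⟨(), hqp.symm⟩) 1)
  simpa [sum_sortUp_mul_sortDown_single] using h

end Ergotropy

section Bipartite

variable {ιa ιb : Type*} [Fintype ιa] [Fintype ιb]

lemma star_vecTensor_dotProduct_vecTensor (a c : ιa → ℂ) (b d : ιb → ℂ) :
    star (vecTensor a b) ⬝ᵥ vecTensor c d = (star a ⬝ᵥ c) * (star b ⬝ᵥ d) := by
  simp only [dotProduct, vecTensor, Pi.star_apply, Fintype.sum_prod_type, Finset.sum_mul_sum,
    star_mul', mul_mul_mul_comm]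

lemma kronecker_mulVec_vecTensor (A : Matrix ιa ιa ℂ) (B : Matrix ιb ιb ℂ)
    (a : ιa → ℂ) (b : ιb → ℂ) :
    (A ⊗ₖ B) *ᵥ vecTensor a b = vecTensor (A *ᵥ a) (B *ᵥ b) := by
  ext p
  simp only [mulVec, dotProduct, vecTensor, Fintype.sum_prod_type, Finset.sum_mul_sum,
    Matrix.kroneckerMap_apply, mul_mul_mul_comm]

variable [DecidableEq ιa] [DecidableEq ιb]

lemma star_vecTensor_dotProduct_kroneckerSum_mulVec_vecTensor (A : Matrix ιa ιa ℂ)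
    (B : Matrix ιb ιb ℂ) {a c : ιa → ℂ} {b d : ιb → ℂ} (hac : star a ⬝ᵥ c = 0)
    (hbd : star b ⬝ᵥ d = 0) :
    star (vecTensor a b) ⬝ᵥ
      (A ⊗ₖ (1 : Matrix ιb ιb ℂ) + (1 : Matrix ιa ιa ℂ) ⊗ₖ B) *ᵥ vecTensor c d = 0 := by
  simp only [Matrix.add_mulVec, kronecker_mulVec_vecTensor, Matrix.one_mulVec, dotProduct_add,
    star_vecTensor_dotProduct_vecTensor, hac, hbd, mul_zero, zero_mul, add_zero]

variable {K : Type*} [Fintype K] [DecidableEq K]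

lemma pinch_ketbra_sum_smul_vecTensor {α : K → ιa → ℂ}
    (hα : ∀ k l, star (α k) ⬝ᵥ α l = if k = l then 1 else 0) (β : K → ιb → ℂ) (c : K → ℂ) :
    pinch (fun k => ketbra (α k)) (ketbra (∑ k, c k • vecTensor (α k) (β k)))
      = ∑ k, (c k * star (c k)) • ketbra (vecTensor (α k) (β k)) := by
  refine Finset.sum_congr rfl fun k _ => ?_
  have hP : (ketbra (α k) ⊗ₖ (1 : Matrix ιb ιb ℂ))ᴴ = ketbra (α k) ⊗ₖ 1 := by
    rw [Matrix.conjTranspose_kronecker, (isHermitian_ketbra (α k)).eq, Matrix.conjTranspose_one]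
  have hproj : (ketbra (α k) ⊗ₖ (1 : Matrix ιb ιb ℂ)) *ᵥ (∑ l, c l • vecTensor (α l) (β l))
      = c k • vecTensor (α k) (β k) := by
    simp only [Matrix.mulVec_sum, Matrix.mulVec_smul, kronecker_mulVec_vecTensor, ketbra_mulVec, hα,
      Matrix.one_mulVec]
    rw [Fintype.sum_eq_single k fun l hl => ?_]
    · simp
    · ext p
      simp [vecTensor, hl.symm]
  calc (ketbra (α k) ⊗ₖ 1) * ketbra (∑ l, c l • vecTensor (α l) (β l)) * (ketbra (α k) ⊗ₖ 1)
      = ketbra ((ketbra (α k) ⊗ₖ 1) *ᵥ ∑ l, c l • vecTensor (α l) (β l)) := by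
        rw [← mul_ketbra_mul_conjTranspose, hP]
    _ = (c k * star (c k)) • ketbra (vecTensor (α k) (β k)) := by rw [hproj, ketbra_smul]

theorem emin_pure_state_noninteracting_general
    (α : K → ιa → ℂ) (β : K → ιb → ℂ)
    (hα : ∀ k l, star (α k) ⬝ᵥ α l = if k = l then 1 else 0)
    (hβ : ∀ k, star (β k) ⬝ᵥ β k = 1)
    (lam : K → ℝ) (hlam : ∀ k, 0 ≤ lam k) (hsum : ∑ k, lam k = 1)
    (ψ : ιa × ιb → ℂ)
    (hψ : ψ = ∑ k, ((Real.sqrt (lam k) : ℝ) : ℂ) • vecTensor (α k) (β k))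
    (H : Matrix (ιa × ιb) (ιa × ιb) ℂ) (hH : H.IsHermitian)
    (hHoff : ∀ k l, k ≠ l →
      star (vecTensor (α k) (β k)) ⬝ᵥ H *ᵥ vecTensor (α l) (β l) = 0)
    (μ : ιa × ιb → ℝ) (f : K → ιa × ιb) (hf : Function.Injective f)
    (hμf : ∀ k, μ (f k) = lam k) (hμ0 : ∀ p, p ∉ Set.range f → μ p = 0) :
    ergotropy (ketbra ψ) H - ergotropy (pinch (fun k => ketbra (α k)) (ketbra ψ)) H
      = ∑ k, sortUp hH.eigenvalues k * sortDown μ k - ⨅ p, hH.eigenvalues p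
    ∧ 0 ≤ ∑ k, sortUp hH.eigenvalues k * sortDown μ k - ⨅ p, hH.eigenvalues p := by
  let w k := vecTensor (α k) (β k)
  have hw (k l) : star (w k) ⬝ᵥ w l = if k = l then 1 else 0 := by
    rw [star_vecTensor_dotProduct_vecTensor, hα]
    rcases eq_or_ne k l with rfl | hkl <;> simp [*]
  have hsqrt (k) : (√(lam k) : ℂ) * star (√(lam k) : ℂ) = lam k := by
    rw [Complex.star_def, Complex.conj_ofReal, ← Complex.ofReal_mul, Real.mul_self_sqrt (hlam k)]
  have hnorm : star ψ ⬝ᵥ ψ = 1 := by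
    rw [hψ, star_sum_smul_dotProduct_sum_smul hw]
    simp only [hsqrt, ← Complex.ofReal_sum, hsum, Complex.ofReal_one]
  have hpinch : pinch (fun k => ketbra (α k)) (ketbra ψ) = ∑ k, (lam k : ℂ) • ketbra (w k) := by
    simp only [hψ, pinch_ketbra_sum_smul_vecTensor hα, hsqrt, w]
  have henergy : (ketbra ψ * H).trace = ((∑ k, (lam k : ℂ) • ketbra (w k)) * H).trace := by
    simpa only [hψ, hsqrt] using trace_ketbra_sum_smul_mul hHoff fun k => (√(lam k) : ℂ)
  constructor
  · rw [hpinch, ergotropy_ketbra hH hnorm, ergotropy_sum_smul_ketbra hH hw hf hμf hμ0, henergy]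
    ring
  · have hμ_nonneg (p) : 0 ≤ μ p := by
      by_cases hp : p ∈ Set.range f
      · obtain ⟨k, rfl⟩ := hp
        exact (hμf k).symm ▸ hlam k
      · exact (hμ0 p hp).ge
    have hμ_sum : ∑ p, μ p = 1 := by
      rw [← hsum, Fintype.sum_of_injective f hf lam μ hμ0 fun k => (hμf k).symm]
    exact sub_nonneg.mpr (iInf_le_sum_sortUp_mul_sortDown _ hμ_nonneg hμ_sum)

end Bipartite

/-- Theorem 3 of the paper: EMIN of a pure state under a non-interacting
Hamiltonian equals ∑ ε_k^↑ μ_k^↓ − ε_min ≥ 0. -/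
theorem emin_pure_state_noninteracting {n m : ℕ} (hnm : n ≤ m)
    (α : Fin n → Fin n → ℂ) (β : Fin n → Fin m → ℂ)
    (hα : ∀ k l, star (α k) ⬝ᵥ α l = if k = l then 1 else 0)
    (hβ : ∀ k l, star (β k) ⬝ᵥ β l = if k = l then 1 else 0)
    (lam : Fin n → ℝ) (hlam : ∀ k, 0 ≤ lam k) (hsum : ∑ k, lam k = 1)
    (ψ : Fin n × Fin m → ℂ)
    (hψ : ψ = ∑ k, ((Real.sqrt (lam k) : ℝ) : ℂ) • vecTensor (α k) (β k))
    {A : Matrix (Fin n) (Fin n) ℂ} {B : Matrix (Fin m) (Fin m) ℂ}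
    (hA : A.IsHermitian) (hB : B.IsHermitian)
    (H : Matrix (Fin n × Fin m) (Fin n × Fin m) ℂ)
    (hHdef : H = A ⊗ₖ (1 : Matrix (Fin m) (Fin m) ℂ)
        + (1 : Matrix (Fin n) (Fin n) ℂ) ⊗ₖ B)
    (hH : H.IsHermitian)
    -- μ is λ padded with nm − n zeros:
    (μ : Fin n × Fin m → ℝ) (f : Fin n → Fin n × Fin m) (hf : Function.Injective f)
    (hμf : ∀ k, μ (f k) = lam k) (hμ0 : ∀ p, p ∉ Set.range f → μ p = 0) :
    ergotropy (ketbra ψ) H - ergotropy (pinch (fun k => ketbra (α k)) (ketbra ψ)) H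
      = ∑ k, sortUp hH.eigenvalues k * sortDown μ k - ⨅ p, hH.eigenvalues p
    ∧ 0 ≤ ∑ k, sortUp hH.eigenvalues k * sortDown μ k - ⨅ p, hH.eigenvalues p :=
  emin_pure_state_noninteracting_general α β hα (fun k => by simp [hβ]) lam hlam hsum ψ hψ H hH
    (fun k l hkl => hHdef ▸ star_vecTensor_dotProduct_kroneckerSum_mulVec_vecTensor A B
      (by rw [hα, if_neg hkl]) (by rw [hβ, if_neg hkl])) μ f hf hμf hμ0
end

section
/- (Pinching majorization) Let ρ be an N×N Hermitian matrix and (Q_k) a finite family of pairwise-orthogonal N×N orthogonal projections with ∑_k Q_k = I_N, and set σ := ∑_k Q_k ρ Q_k. Then the eigenvalues of σ are majorized by those of ρ: for every r with 1 ≤ r ≤ N, the sum of the r largest eigenvalues of σ (with multiplicity) is at most the sum of the r largest eigenvalues of ρ (with multiplicity), and Tr(σ) = Tr(ρ). -/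
open scoped BigOperators ComplexOrder
open Matrix Kronecker

/-!
A pinching is a positive linear map `Φ` that fixes the identity and preserves the trace, and any
such map turns spectra into majorized spectra. Conjugating by the eigenvector unitaries of `ρ` and
`Φ ρ` reduces to a map of this kind sending `diagonal λ` to `diagonal μ`. The numbers
`Φ (E j j) i i` then form a doubly stochastic matrix `D` with `μ = D λ`, so a sum of `r` entries of
`μ` is a combination of the entries of `λ` whose weights lie in `[0, 1]` and add up to `r`. Such a
combination is largest when all the weight sits on the `r` largest entries.
-/

section TopEntries

open Finset

lemma exists_threshold_of_forall_notMem_le {ι α : Type*} [Finite ι] [LinearOrder α] [Nonempty α]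
    {g : ι → α} {s : Finset ι} (hs : ∀ i ∈ s, ∀ j ∉ s, g j ≤ g i) :
    ∃ t, (∀ i ∈ s, t ≤ g i) ∧ ∀ j ∉ s, g j ≤ t := by
  obtain rfl | hne := s.eq_empty_or_nonempty
  · obtain ⟨t, ht⟩ := (Set.finite_range g).bddAbove
    exact ⟨t, by simp, fun j _ ↦ ht (Set.mem_range_self j)⟩
  · obtain ⟨i, hi, hmin⟩ := s.exists_min_image g hne
    exact ⟨g i, hmin, hs i hi⟩

variable {ι R : Type*} [Fintype ι] [CommRing R] [LinearOrder R] [IsStrictOrderedRing R]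

lemma sum_mul_le_sum_of_sum_eq_card {c g : ι → R} {s : Finset ι}
    (hc₀ : ∀ i, 0 ≤ c i) (hc₁ : ∀ i, c i ≤ 1) (hc : ∑ i, c i = #s)
    (hs : ∀ i ∈ s, ∀ j ∉ s, g j ≤ g i) :
    ∑ i, c i * g i ≤ ∑ i ∈ s, g i := by
  classical
  obtain ⟨t, hle, hge⟩ := exists_threshold_of_forall_notMem_le hs
  have pointwise (i : ι) :
      c i * g i ≤ (if i ∈ s then g i else 0) + (c i - if i ∈ s then 1 else 0) * t := by
    split_ifs with hi
    · linarith [mul_nonneg (sub_nonneg.2 (hc₁ i)) (sub_nonneg.2 (hle i hi))]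
    · linarith [mul_le_mul_of_nonneg_left (hge i hi) (hc₀ i)]
  calc ∑ i, c i * g i
    _ ≤ ∑ i, ((if i ∈ s then g i else 0) + (c i - if i ∈ s then 1 else 0) * t) :=
        sum_le_sum fun i _ ↦ pointwise i
    _ = ∑ i ∈ s, g i + (∑ i, c i - #s) * t := by
        simp [sum_add_distrib, ← sum_mul, sum_sub_distrib]
    _ = ∑ i ∈ s, g i := by rw [hc, sub_self, zero_mul, add_zero]

lemma sum_mulVec_le_sum_of_mem_doublyStochastic [DecidableEq ι] {D : Matrix ι ι R}
    (hD : D ∈ doublyStochastic R ι) {g : ι → R} {s u : Finset ι} (hcard : #u = #s)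
    (hs : ∀ i ∈ s, ∀ j ∉ s, g j ≤ g i) :
    ∑ i ∈ u, (D *ᵥ g) i ≤ ∑ i ∈ s, g i := by
  have hnonneg (i j : ι) : 0 ≤ D i j := nonneg_of_mem_doublyStochastic hD
  have weight_le_one (j : ι) : ∑ i ∈ u, D i j ≤ 1 :=
    sum_col_of_mem_doublyStochastic hD j ▸
      sum_le_univ_sum_of_nonneg fun i ↦ hnonneg i j
  have total_weight : ∑ j, ∑ i ∈ u, D i j = #s := by
    rw [sum_comm, sum_congr rfl fun i _ ↦ sum_row_of_mem_doublyStochastic hD i]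
    simp [hcard]
  calc ∑ i ∈ u, (D *ᵥ g) i
    _ = ∑ j, (∑ i ∈ u, D i j) * g j := by
        simp only [mulVec, dotProduct, sum_mul]
        exact sum_comm
    _ ≤ ∑ i ∈ s, g i :=
        sum_mul_le_sum_of_sum_eq_card (fun j ↦ sum_nonneg fun i _ ↦ hnonneg i j)
          weight_le_one total_weight hs

end TopEntries

section SortDown

open Finset

variable {ι : Type*} [Fintype ι]

lemma sortDown_antitone (f : ι → ℝ) : Antitone (sortDown f) :=
  fun _ _ hij ↦ Tuple.monotone_sort _ (Fin.rev_le_rev.2 hij)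

lemma exists_equiv_sortDown_eq (f : ι → ℝ) :
    ∃ e : Fin (Fintype.card ι) ≃ ι, ∀ i, sortDown f i = f (e i) :=
  ⟨(Fin.revPerm.trans (Tuple.sort _)).trans (Fintype.equivFin ι).symm, fun _ ↦ rfl⟩

lemma exists_finset_sum_sortDown_eq (f : ι → ℝ) (r : ℕ) :
    ∃ s : Finset ι, #s = min (Fintype.card ι) r ∧ (∀ i ∈ s, ∀ j ∉ s, f j ≤ f i) ∧
      ∑ i with i.val < r, sortDown f i = ∑ i ∈ s, f i := by
  obtain ⟨e, he⟩ := exists_equiv_sortDown_eq f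
  refine ⟨({i | i.val < r} : Finset (Fin (Fintype.card ι))).map e.toEmbedding, ?_, ?_, ?_⟩
  · rw [card_map, Fin.card_filter_val_lt]
  · intro i hi j hj
    obtain ⟨a, rfl⟩ := e.surjective i
    obtain ⟨b, rfl⟩ := e.surjective j
    have ha : a.val < r := by simpa using hi
    have hb : r ≤ b.val := by simpa using hj
    rw [← he, ← he]
    exact sortDown_antitone f (Fin.le_def.2 (ha.le.trans hb))
  · simp only [sum_map, Equiv.coe_toEmbedding, he]

theorem sum_sortDown_mulVec_le [DecidableEq ι] {D : Matrix ι ι ℝ}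
    (hD : D ∈ doublyStochastic ℝ ι) (g : ι → ℝ) (r : ℕ) :
    ∑ i with i.val < r, sortDown (D *ᵥ g) i ≤ ∑ i with i.val < r, sortDown g i := by
  obtain ⟨u, hu, -, hsum_u⟩ := exists_finset_sum_sortDown_eq (D *ᵥ g) r
  obtain ⟨s, hs, hs_top, hsum_s⟩ := exists_finset_sum_sortDown_eq g r
  rw [hsum_u, hsum_s]
  exact sum_mulVec_le_sum_of_mem_doublyStochastic hD (hu.trans hs.symm) hs_top

end SortDown

section KrausMap

variable {R ι K : Type*} [CommSemiring R] [StarRing R] [Fintype ι] [Fintype K]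

/-- The linear map with Kraus operators `A k`, which is completely positive over `ℝ` and `ℂ`.
Orthogonal projections `A k` that sum to the identity make it a pinching. -/
def krausMap (A : K → Matrix ι ι R) : Matrix ι ι R →ₗ[R] Matrix ι ι R :=
  ∑ k, LinearMap.mulLeftRight R (A k, (A k)ᴴ)

lemma krausMap_apply (A : K → Matrix ι ι R) (X : Matrix ι ι R) :
    krausMap A X = ∑ k, A k * X * (A k)ᴴ := by
  simp [krausMap]

end KrausMap

section DoublyStochasticMap

open Finset

variable {𝕜 ι : Type*} [RCLike 𝕜] [Fintype ι] [DecidableEq ι]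

/-- A doubly stochastic map on matrices: a linear map which is positive, unital and
trace-preserving. Complete positivity is not required. -/
structure IsDoublyStochasticMap (Φ : Matrix ι ι 𝕜 →ₗ[𝕜] Matrix ι ι 𝕜) : Prop where
  posSemidef_map : ∀ ⦃X : Matrix ι ι 𝕜⦄, X.PosSemidef → (Φ X).PosSemidef
  map_one : Φ 1 = 1
  trace_map : ∀ X, (Φ X).trace = X.trace

/-- The classical transition matrix of a linear map `Φ` on matrices: its `(i, j)` entry is the
weight that `Φ` moves from the `j`-th to the `i`-th diagonal matrix unit. Only the real part is
recorded, which loses nothing when `Φ` is positive. -/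
def transitionMatrix (Φ : Matrix ι ι 𝕜 →ₗ[𝕜] Matrix ι ι 𝕜) : Matrix ι ι ℝ :=
  Matrix.of fun i j ↦ RCLike.re (Φ (single j j 1) i i)

lemma transitionMatrix_mulVec (Φ : Matrix ι ι 𝕜 →ₗ[𝕜] Matrix ι ι 𝕜) (d : ι → ℝ) (i : ι) :
    (transitionMatrix Φ *ᵥ d) i = RCLike.re (Φ (diagonal (RCLike.ofReal ∘ d)) i i) := by
  have hdiag : diagonal (RCLike.ofReal ∘ d) = ∑ j, (d j : 𝕜) • single j j (1 : 𝕜) := by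
    simp only [smul_single, smul_eq_mul, mul_one, sum_single_eq_diagonal, Function.comp_def]
  simp only [hdiag, map_sum, map_smul, Matrix.sum_apply, Matrix.smul_apply, smul_eq_mul,
    RCLike.re_ofReal_mul, transitionMatrix, mulVec, dotProduct, of_apply, mul_comm]

lemma isDoublyStochasticMap_conjStarAlgAut (U : unitary (Matrix ι ι 𝕜)) :
    IsDoublyStochasticMap (Unitary.conjStarAlgAut 𝕜 _ U).toAlgEquiv.toLinearMap where
  posSemidef_map X hX := hX.mul_mul_conjTranspose_same (U : Matrix ι ι 𝕜)
  map_one := map_one (Unitary.conjStarAlgAut 𝕜 _ U)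
  trace_map X := by
    change ((U : Matrix ι ι 𝕜) * X * star (U : Matrix ι ι 𝕜)).trace = X.trace
    rw [trace_mul_cycle, Unitary.coe_star_mul_self, one_mul]

namespace IsDoublyStochasticMap

variable {Φ Ψ : Matrix ι ι 𝕜 →ₗ[𝕜] Matrix ι ι 𝕜}

lemma comp (hΦ : IsDoublyStochasticMap Φ) (hΨ : IsDoublyStochasticMap Ψ) :
    IsDoublyStochasticMap (Φ ∘ₗ Ψ) where
  posSemidef_map _ hX := hΦ.posSemidef_map (hΨ.posSemidef_map hX)
  map_one := by rw [LinearMap.comp_apply, hΨ.map_one, hΦ.map_one]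
  trace_map X := by rw [LinearMap.comp_apply, hΦ.trace_map, hΨ.trace_map]

lemma transitionMatrix_mem_doublyStochastic (hΦ : IsDoublyStochasticMap Φ) :
    transitionMatrix Φ ∈ doublyStochastic ℝ ι := by
  refine mem_doublyStochastic_iff_sum.2 ⟨fun i j ↦ ?_, fun i ↦ ?_, fun j ↦ ?_⟩
  · have hE : (single j j (1 : 𝕜)).PosSemidef := by
      rw [← diagonal_single, posSemidef_diagonal_iff]
      exact Pi.single_nonneg.2 zero_le_one
    exact (RCLike.nonneg_iff.1 (hΦ.posSemidef_map hE).diag_nonneg).1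
  · have hrow := transitionMatrix_mulVec Φ 1 i
    have hone : diagonal (RCLike.ofReal ∘ (1 : ι → ℝ)) = (1 : Matrix ι ι 𝕜) := by
      ext; simp [diagonal_apply, one_apply]
    rw [hone, hΦ.map_one] at hrow
    simpa [mulVec, dotProduct] using hrow
  · calc ∑ i, transitionMatrix Φ i j
      _ = RCLike.re (Φ (single j j 1)).trace := by simp [transitionMatrix, Matrix.trace]
      _ = 1 := by simp [hΦ.trace_map]

lemma exists_eigenvalues_eq_mulVec (hΦ : IsDoublyStochasticMap Φ) {ρ σ : Matrix ι ι 𝕜}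
    (hρ : ρ.IsHermitian) (hσ : σ.IsHermitian) (hσρ : Φ ρ = σ) :
    ∃ D ∈ doublyStochastic ℝ ι, hσ.eigenvalues = D *ᵥ hρ.eigenvalues := by
  let V := Unitary.conjStarAlgAut 𝕜 _ hρ.eigenvectorUnitary
  let U := Unitary.conjStarAlgAut 𝕜 _ (star hσ.eigenvectorUnitary)
  let Ψ := U.toAlgEquiv.toLinearMap ∘ₗ Φ ∘ₗ V.toAlgEquiv.toLinearMap
  have hΨ : IsDoublyStochasticMap Ψ :=
    (isDoublyStochasticMap_conjStarAlgAut _).comp (hΦ.comp (isDoublyStochasticMap_conjStarAlgAut _))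
  have hdiag : Ψ (diagonal (RCLike.ofReal ∘ hρ.eigenvalues)) =
      diagonal (RCLike.ofReal ∘ hσ.eigenvalues) := by
    change U (Φ (V _)) = _
    rw [← hρ.spectral_theorem, hσρ, hσ.conjStarAlgAut_star_eigenvectorUnitary]
  refine ⟨_, hΨ.transitionMatrix_mem_doublyStochastic, funext fun i ↦ ?_⟩
  rw [transitionMatrix_mulVec, hdiag]
  simp

end IsDoublyStochasticMap

section DoublyStochasticKrausMap

variable {K : Type*} [Fintype K] {A : K → Matrix ι ι 𝕜}

lemma isDoublyStochasticMap_krausMap (hA : ∑ k, A k * (A k)ᴴ = 1) (hA' : ∑ k, (A k)ᴴ * A k = 1) :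
    IsDoublyStochasticMap (krausMap A) where
  posSemidef_map X hX := by
    rw [krausMap_apply]
    exact posSemidef_sum _ fun k _ ↦ hX.mul_mul_conjTranspose_same (A k)
  map_one := by simp [krausMap_apply, hA]
  trace_map X := by
    simp_rw [krausMap_apply, trace_sum, trace_mul_cycle (A _) X]
    rw [← trace_sum, ← sum_mul, hA', one_mul]

lemma isDoublyStochasticMap_krausMap_of_isStarProjection (hA : ∀ k, IsStarProjection (A k))
    (hsum : ∑ k, A k = 1) : IsDoublyStochasticMap (krausMap A) := by
  have hherm (k : K) : (A k)ᴴ = A k := (hA k).isSelfAdjoint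
  have hidem (k : K) : A k * A k = A k := (hA k).isIdempotentElem
  apply isDoublyStochasticMap_krausMap <;> simp only [hherm, hidem, hsum]

end DoublyStochasticKrausMap

theorem pinching_majorization_general {Φ : Matrix ι ι 𝕜 →ₗ[𝕜] Matrix ι ι 𝕜}
    (hΦ : IsDoublyStochasticMap Φ) {ρ σ : Matrix ι ι 𝕜} (hρ : ρ.IsHermitian) (hσ : σ.IsHermitian)
    (hσρ : Φ ρ = σ) :
    (∀ r : ℕ, ∑ i with i.val < r, sortDown hσ.eigenvalues i ≤
      ∑ i with i.val < r, sortDown hρ.eigenvalues i) ∧ σ.trace = ρ.trace := by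
  obtain ⟨D, hD, heig⟩ := hΦ.exists_eigenvalues_eq_mulVec hρ hσ hσρ
  exact ⟨fun r ↦ heig ▸ sum_sortDown_mulVec_le hD hρ.eigenvalues r, hσρ ▸ hΦ.trace_map ρ⟩

end DoublyStochasticMap

/-- pinching majorization: the eigenvalues of a pinched Hermitian matrix
are majorized by those of the original matrix, and the trace is preserved. -/
theorem pinching_majorization {ι : Type*} [Fintype ι] [DecidableEq ι]
    {ρ : Matrix ι ι ℂ} (hρ : ρ.IsHermitian)
    {K : Type*} [Fintype K] (Q : K → Matrix ι ι ℂ)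
    (hQherm : ∀ k, (Q k)ᴴ = Q k) (hQidem : ∀ k, Q k * Q k = Q k)
    (hQorth : ∀ k l, k ≠ l → Q k * Q l = 0)
    (hQsum : ∑ k, Q k = (1 : Matrix ι ι ℂ))
    (hσ : (∑ k, Q k * ρ * Q k).IsHermitian) :
    (∀ r : ℕ, 1 ≤ r → r ≤ Fintype.card ι →
      ∑ i ∈ Finset.univ.filter (fun i : Fin (Fintype.card ι) => (i : ℕ) < r),
          sortDown hσ.eigenvalues i
        ≤ ∑ i ∈ Finset.univ.filter (fun i : Fin (Fintype.card ι) => (i : ℕ) < r),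
            sortDown hρ.eigenvalues i)
    ∧ (∑ k, Q k * ρ * Q k).trace = ρ.trace := by
  have hΦ := isDoublyStochasticMap_krausMap_of_isStarProjection (fun k ↦ ⟨hQidem k, hQherm k⟩) hQsum
  have hmaj := pinching_majorization_general hΦ hρ hσ (by simp only [krausMap_apply, hQherm])
  exact ⟨fun r _ _ ↦ hmaj.1 r, hmaj.2⟩
end
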